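/- Assume the dataset D has ℓ¹ diameter at most 1. For any k-element subset S of D' = D \ {x₀} and any y ∈ S, replacing y by x₀ in the mixup average changes the Laplacian density by at most a factor exp(‖x₀ − y‖₁/(kσ)): for every z ∈ ℝ^d, exp(−‖x₀ − y‖₁/(kσ)) · φ_σ(z − (1/k)Σ_{x∈S} x) ≤ φ_σ(z − (1/k)(x₀ + Σ_{x ∈ S \ {y}} x)) ≤ exp(‖x₀ − y‖₁/(kσ)) · φ_σ(z − (1/k)Σ_{x∈S} x), and in particular both ratios are bounded by exp(1/(kσ)). -/

import Mathlib

open Finset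

/-- The d-dimensional isotropic Laplacian density with scale σ. -/
noncomputable def laplacianDensity (d : ℕ) (σ : ℝ) (η : Fin d → ℝ) : ℝ :=
  ((2 * σ) ^ d)⁻¹ * Real.exp (-(∑ i, |η i|) / σ)

/-! The logarithm of the density is `1/σ`-Lipschitz for the ℓ¹ distance, by the triangle inequality,
and replacing `y` by `x₀` moves the average by `(x₀ - y)/k`. -/

theorem add_sum_erase_sub_sum {M : Type*} [AddCommGroup M] [DecidableEq M]
    {S : Finset M} {y : M} (hy : y ∈ S) (x : M) :
    x + ∑ w ∈ S.erase y, w - ∑ w ∈ S, w = x - y := by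
  rw [sum_erase_eq_sub hy]
  abel

section SumAbs

variable {ι R : Type*} [Fintype ι] [Ring R] [LinearOrder R] [IsOrderedRing R]

theorem sum_abs_sub_sum_abs_le (u v : ι → R) :
    ∑ i, |u i| - ∑ i, |v i| ≤ ∑ i, |u i - v i| := by
  rw [← sum_sub_distrib]
  exact sum_le_sum fun i _ => abs_sub_abs_le_abs_sub (u i) (v i)

theorem sum_abs_sub_smul_sub_sub_smul (c : R) (z u v : ι → R) :
    ∑ i, |(z - c • u) i - (z - c • v) i| = |c| * ∑ i, |u i - v i| := by
  simp only [Pi.sub_apply, Pi.smul_apply, smul_eq_mul, sub_sub_sub_cancel_left, ← mul_sub,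
    abs_mul, abs_sub_comm (v _), mul_sum]

theorem sum_abs_sub_smul_swap [DecidableEq (ι → R)] {S : Finset (ι → R)} {y : ι → R}
    (hy : y ∈ S) (c : R) (x z : ι → R) :
    ∑ i, |(z - c • (x + ∑ w ∈ S.erase y, w)) i - (z - c • ∑ w ∈ S, w) i| =
      |c| * ∑ i, |x i - y i| := by
  rw [sum_abs_sub_smul_sub_sub_smul]
  simp only [← Pi.sub_apply, add_sum_erase_sub_sum hy]

end SumAbs

section LaplacianDensity

variable {d : ℕ} {σ : ℝ}

theorem laplacianDensity_le_exp_mul (hσ : 0 < σ) (u v : Fin d → ℝ) :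
    laplacianDensity d σ u ≤ Real.exp ((∑ i, |u i - v i|) / σ) * laplacianDensity d σ v := by
  have hexponent : -(∑ i, |u i|) / σ ≤ (∑ i, |u i - v i|) / σ + -(∑ i, |v i|) / σ := by
    have htriangle := sum_abs_sub_sum_abs_le v u
    simp only [abs_sub_comm (v _)] at htriangle
    rw [← add_div]
    gcongr
    linarith
  calc laplacianDensity d σ u
      ≤ ((2 * σ) ^ d)⁻¹ * Real.exp ((∑ i, |u i - v i|) / σ + -(∑ i, |v i|) / σ) := by
        unfold laplacianDensity
        gcongr
    _ = Real.exp ((∑ i, |u i - v i|) / σ) * laplacianDensity d σ v := by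
        rw [Real.exp_add, laplacianDensity, mul_left_comm]

theorem exp_neg_mul_laplacianDensity_le (hσ : 0 < σ) (u v : Fin d → ℝ) :
    Real.exp (-(∑ i, |u i - v i|) / σ) * laplacianDensity d σ v ≤ laplacianDensity d σ u := by
  rw [neg_div, Real.exp_neg, inv_mul_le_iff₀ (Real.exp_pos _)]
  simpa only [abs_sub_comm (v _)] using laplacianDensity_le_exp_mul hσ v u

theorem laplacian_density_swap_bound_general (hσ : 0 < σ) {k : ℝ} (hk : 0 < k)
    {S : Finset (Fin d → ℝ)} {y : Fin d → ℝ} (hy : y ∈ S) {x₀ : Fin d → ℝ} {r : ℝ}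
    (hr : ∑ i, |x₀ i - y i| ≤ r) (z : Fin d → ℝ) :
    Real.exp (-(∑ i, |x₀ i - y i|) / (k * σ)) * laplacianDensity d σ (z - k⁻¹ • ∑ x ∈ S, x)
        ≤ laplacianDensity d σ (z - k⁻¹ • (x₀ + ∑ x ∈ S.erase y, x)) ∧
    laplacianDensity d σ (z - k⁻¹ • (x₀ + ∑ x ∈ S.erase y, x))
        ≤ Real.exp ((∑ i, |x₀ i - y i|) / (k * σ)) *
            laplacianDensity d σ (z - k⁻¹ • ∑ x ∈ S, x) ∧
    Real.exp ((∑ i, |x₀ i - y i|) / (k * σ)) ≤ Real.exp (r / (k * σ)) := by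
  have hdist : ∑ i, |(z - k⁻¹ • (x₀ + ∑ x ∈ S.erase y, x)) i - (z - k⁻¹ • ∑ x ∈ S, x) i| =
      (∑ i, |x₀ i - y i|) / k := by
    rw [sum_abs_sub_smul_swap hy, abs_of_pos (inv_pos.mpr hk), inv_mul_eq_div]
  refine ⟨?_, ?_, by gcongr⟩
  · simpa only [hdist, ← neg_div, div_div] using exp_neg_mul_laplacianDensity_le hσ
      (z - k⁻¹ • (x₀ + ∑ x ∈ S.erase y, x)) (z - k⁻¹ • ∑ x ∈ S, x)
  · simpa only [hdist, div_div] using laplacianDensity_le_exp_mul hσ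
      (z - k⁻¹ • (x₀ + ∑ x ∈ S.erase y, x)) (z - k⁻¹ • ∑ x ∈ S, x)

end LaplacianDensity

/-- If `D` has ℓ¹ diameter at most 1, then for any k-element subset `S` of
`D' = D \ {x₀}` and any `y ∈ S`, replacing `y` by `x₀` in the mixup average changes
the Laplacian density by at most a factor `exp(‖x₀ − y‖₁/(kσ))`, and in particular
both ratios are bounded by `exp(1/(kσ))`. -/
theorem laplacian_density_swap_bound
    (d : ℕ) (hd : 1 ≤ d) (σ : ℝ) (hσ : 0 < σ)
    (D : Finset (Fin d → ℝ)) (n : ℕ) (hn : D.card = n)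
    (hdiam : ∀ x ∈ D, ∀ y ∈ D, ∑ i, |x i - y i| ≤ 1)
    (x₀ : Fin d → ℝ) (hx₀ : x₀ ∈ D)
    (k : ℕ) (hk1 : 1 ≤ k) (hkn : k ≤ n - 1)
    (S : Finset (Fin d → ℝ)) (hS : S ∈ (D.erase x₀).powersetCard k)
    (y : Fin d → ℝ) (hy : y ∈ S)
    (z : Fin d → ℝ) :
    Real.exp (-(∑ i, |x₀ i - y i|) / (k * σ)) *
          laplacianDensity d σ (z - (k : ℝ)⁻¹ • ∑ x ∈ S, x)
        ≤ laplacianDensity d σ (z - (k : ℝ)⁻¹ • (x₀ + ∑ x ∈ S.erase y, x)) ∧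
    laplacianDensity d σ (z - (k : ℝ)⁻¹ • (x₀ + ∑ x ∈ S.erase y, x))
        ≤ Real.exp ((∑ i, |x₀ i - y i|) / (k * σ)) *
            laplacianDensity d σ (z - (k : ℝ)⁻¹ • ∑ x ∈ S, x) ∧
    Real.exp ((∑ i, |x₀ i - y i|) / (k * σ)) ≤ Real.exp (1 / (k * σ)) := by
  have hyD : y ∈ D := mem_of_mem_erase ((mem_powersetCard.mp hS).1 hy)
  exact laplacian_density_swap_bound_general hσ (Nat.cast_pos.mpr hk1) hy (hdiam x₀ hx₀ y hyD) z
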